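/- Let Φ be a real-valued function on symmetric t×t real matrices that is concave, invariant under conjugation by permutation matrices, and nondecreasing with respect to the Loewner order. Let λ0 ∈ ℝ and let g be an exchangeable prior. Let d be a design such that for g-almost every τ0 one has τ0′ C_{d22} τ0 > 0 and such that τ0 ↦ Φ(C_{d,τ0,λ0}) is g-integrable. Then the symmetric design d* with weights p*_s = (1/t!) ∑_σ p_{σ⁻¹∘s} satisfies τ0′ C_{d*22} τ0 > 0 for g-almost every τ0 and ∫ Φ(C_{d,τ0,λ0}) g(dτ0) ≤ ∫ Φ(C_{d*,τ0,λ0}) g(dτ0). -/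

import Mathlib

open Matrix MeasureTheory
open scoped Classical

noncomputable section

/-- A treatment sequence: assigns a treatment in `Fin t` to each period in `Fin p`. -/
abbrev TrtSeq (p t : ℕ) := Fin p → Fin t

/-- Treatment/period incidence matrix `T_s`. -/
def Tmat {p t : ℕ} (s : TrtSeq p t) : Matrix (Fin p) (Fin t) ℝ :=
  Matrix.of fun k i => if s k = i then 1 else 0

/-- Carryover incidence matrix `F_s`: first row zero, row `k` records the treatment
in period `k-1`. -/
def Fmat {p t : ℕ} (s : TrtSeq p t) : Matrix (Fin p) (Fin t) ℝ :=
  Matrix.of fun k i =>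
    if (k : ℕ) = 0 then 0
    else if s ⟨(k : ℕ) - 1, Nat.lt_of_le_of_lt (Nat.sub_le _ _) k.isLt⟩ = i then 1 else 0

/-- The all-ones `m × m` matrix `J_m`. -/
def Jmat (m : ℕ) : Matrix (Fin m) (Fin m) ℝ := Matrix.of fun _ _ => 1

/-- `B_t = I_t - J_t / t`. -/
def Bmat (t : ℕ) : Matrix (Fin t) (Fin t) ℝ := 1 - ((t : ℝ))⁻¹ • Jmat t

/-- `B̃ = Σ⁻¹ - Σ⁻¹ J_p Σ⁻¹ / (1_p' Σ⁻¹ 1_p)`. -/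
def Btil {p : ℕ} (S : Matrix (Fin p) (Fin p) ℝ) : Matrix (Fin p) (Fin p) ℝ :=
  S⁻¹ - (((fun _ => (1 : ℝ)) : Fin p → ℝ) ⬝ᵥ (S⁻¹ *ᵥ fun _ => (1 : ℝ)))⁻¹ •
    (S⁻¹ * Jmat p * S⁻¹)

/-- `G_1(s) = T_s`, `G_2(s) = F_s`. -/
def Gmat {p t : ℕ} (i : Fin 2) (s : TrtSeq p t) : Matrix (Fin p) (Fin t) ℝ :=
  if i = 0 then Tmat s else Fmat s

/-- An approximate design: nonnegative weights summing to one. -/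
def IsDesign {p t : ℕ} (w : TrtSeq p t → ℝ) : Prop :=
  (∀ s, 0 ≤ w s) ∧ ∑ s : TrtSeq p t, w s = 1

/-- `Ĉ_{sij} = B_t G_i(s)' B̃ G_j(s) B_t`. -/
def Chat {p t : ℕ} (S : Matrix (Fin p) (Fin p) ℝ) (s : TrtSeq p t) (i j : Fin 2) :
    Matrix (Fin t) (Fin t) ℝ :=
  Bmat t * (Gmat i s)ᵀ * Btil S * Gmat j s * Bmat t

/-- `c_{sij} = tr Ĉ_{sij}`. -/
def cseq {p t : ℕ} (S : Matrix (Fin p) (Fin p) ℝ) (s : TrtSeq p t) (i j : Fin 2) : ℝ :=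
  (Chat S s i j).trace

/-- `Ĉ_{dij} = n ∑_s p_s Ĉ_{sij}`. -/
def ChatD {p t : ℕ} (n : ℕ) (S : Matrix (Fin p) (Fin p) ℝ) (w : TrtSeq p t → ℝ)
    (i j : Fin 2) : Matrix (Fin t) (Fin t) ℝ :=
  (n : ℝ) • ∑ s : TrtSeq p t, w s • Chat S s i j

/-- `C_{dij} = Ĉ_{dij} - n (∑_s p_s G_i(s) B_t)' B̃ (∑_s p_s G_j(s) B_t)`. -/
def CD {p t : ℕ} (n : ℕ) (S : Matrix (Fin p) (Fin p) ℝ) (w : TrtSeq p t → ℝ)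
    (i j : Fin 2) : Matrix (Fin t) (Fin t) ℝ :=
  ChatD n S w i j -
    (n : ℝ) • ((∑ s : TrtSeq p t, w s • (Gmat i s * Bmat t))ᵀ * Btil S *
      (∑ s : TrtSeq p t, w s • (Gmat j s * Bmat t)))

/-- `c_{dij} = tr Ĉ_{dij} = n ∑_s p_s c_{sij}`. -/
def cD {p t : ℕ} (n : ℕ) (S : Matrix (Fin p) (Fin p) ℝ) (w : TrtSeq p t → ℝ)
    (i j : Fin 2) : ℝ :=
  (ChatD n S w i j).trace

/-- Fisher information matrix `C_{d,τ0,λ0}` for the direct treatment effects under the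
proportional model. -/
def CInfo {p t : ℕ} (n : ℕ) (S : Matrix (Fin p) (Fin p) ℝ) (w : TrtSeq p t → ℝ)
    (τ0 : Fin t → ℝ) (l0 : ℝ) : Matrix (Fin t) (Fin t) ℝ :=
  CD n S w 0 0 + l0 • (CD n S w 0 1 + CD n S w 1 0) + (l0 ^ 2) • CD n S w 1 1 -
    (τ0 ⬝ᵥ (CD n S w 1 1 *ᵥ τ0))⁻¹ •
      ((CD n S w 0 1 + l0 • CD n S w 1 1) * vecMulVec τ0 τ0 *
        (CD n S w 1 0 + l0 • CD n S w 1 1))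

/-- Permutation matrix `S_σ` with `(S_σ)_{j,i} = 1` iff `i = σ j`. -/
def Smat {t : ℕ} (σ : Equiv.Perm (Fin t)) : Matrix (Fin t) (Fin t) ℝ :=
  Matrix.of fun j i => if i = σ j then 1 else 0

/-- The relabelled sequence `σ ∘ s`. -/
def permSeq {p t : ℕ} (σ : Equiv.Perm (Fin t)) (s : TrtSeq p t) : TrtSeq p t := fun k => σ (s k)

/-- The design `σ d`, with weights `(σd)_s = p_{σ⁻¹ ∘ s}`. -/
def permDesign {p t : ℕ} (σ : Equiv.Perm (Fin t)) (w : TrtSeq p t → ℝ) : TrtSeq p t → ℝ :=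
  fun s => w (permSeq σ⁻¹ s)

/-- A design is symmetric if its weights are invariant under treatment relabelling. -/
def IsSymmetricDesign {p t : ℕ} (w : TrtSeq p t → ℝ) : Prop :=
  ∀ (σ : Equiv.Perm (Fin t)) (s : TrtSeq p t), w (permSeq σ s) = w s

/-- The symmetrized design `d*` with weights `p*_s = (1/t!) ∑_σ p_{σ⁻¹ ∘ s}`. -/
def symmetrize {p t : ℕ} (w : TrtSeq p t → ℝ) : TrtSeq p t → ℝ :=
  fun s => ((Nat.factorial t : ℝ))⁻¹ * ∑ σ : Equiv.Perm (Fin t), permDesign σ w s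

/-- `q_s(x) = c_{s11} + 2 c_{s12} x + c_{s22} x²`. -/
def qSeq {p t : ℕ} (S : Matrix (Fin p) (Fin p) ℝ) (s : TrtSeq p t) (x : ℝ) : ℝ :=
  cseq S s 0 0 + 2 * cseq S s 0 1 * x + cseq S s 1 1 * x ^ 2

/-- `q(x) = max_{s ∈ S} q_s(x)`. -/
def qMax (p t : ℕ) (S : Matrix (Fin p) (Fin p) ℝ) (x : ℝ) : ℝ :=
  sSup (Set.range fun s : TrtSeq p t => qSeq S s x)

/-- `y* = inf_x q(x)`. -/
def yStar (p t : ℕ) (S : Matrix (Fin p) (Fin p) ℝ) : ℝ := ⨅ x : ℝ, qMax p t S x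

/-- `q_d(x) = ∑_s p_s q_s(x)`. -/
def qD {p t : ℕ} (S : Matrix (Fin p) (Fin p) ℝ) (w : TrtSeq p t → ℝ) (x : ℝ) : ℝ :=
  ∑ s : TrtSeq p t, w s * qSeq S s x

/-- `x_d = -c_{d12}/c_{d22}`. -/
def xD {p t : ℕ} (n : ℕ) (S : Matrix (Fin p) (Fin p) ℝ) (w : TrtSeq p t → ℝ) : ℝ :=
  -(cD n S w 0 1) / cD n S w 1 1

/-- An exchangeable prior: a probability measure on `{τ : 1'τ = 0, τ ≠ 0}` that is
invariant under all coordinate permutations of `ℝ^t`. -/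
def IsExchangeablePrior {t : ℕ} (g : Measure (Fin t → ℝ)) : Prop :=
  IsProbabilityMeasure g ∧
    g {τ : Fin t → ℝ | ¬((∑ i, τ i) = 0 ∧ τ ≠ 0)} = 0 ∧
    ∀ σ : Equiv.Perm (Fin t), Measure.map (fun τ i => τ (σ i)) g = g

/-- `m_d(τ0) = min {ℓ' C_{d,τ0,λ0} ℓ : 1'ℓ = 0, ℓ'ℓ = 1}`. -/
def mD {p t : ℕ} (n : ℕ) (S : Matrix (Fin p) (Fin p) ℝ) (w : TrtSeq p t → ℝ) (l0 : ℝ)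
    (τ0 : Fin t → ℝ) : ℝ :=
  sInf {v : ℝ | ∃ l : Fin t → ℝ, (∑ i, l i) = 0 ∧ l ⬝ᵥ l = 1 ∧
    v = l ⬝ᵥ (CInfo n S w τ0 l0 *ᵥ l)}

/-- The E-criterion value `E_{g,λ0}(d) = ∫ m_d(τ0) g(dτ0)`. -/
def Ecrit {p t : ℕ} (n : ℕ) (S : Matrix (Fin p) (Fin p) ℝ) (g : Measure (Fin t → ℝ))
    (l0 : ℝ) (w : TrtSeq p t → ℝ) : ℝ :=
  ∫ τ0, mD n S w l0 τ0 ∂g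

/-- Competing designs for E-optimality: designs with a.e. positive `τ0' C_{d22} τ0`
and `g`-integrable `m_d`. -/
def EAdmissible {p t : ℕ} (n : ℕ) (S : Matrix (Fin p) (Fin p) ℝ) (g : Measure (Fin t → ℝ))
    (l0 : ℝ) (w : TrtSeq p t → ℝ) : Prop :=
  IsDesign w ∧ (∀ᵐ τ0 ∂g, 0 < τ0 ⬝ᵥ (CD n S w 1 1 *ᵥ τ0)) ∧
    Integrable (mD n S w l0) g

/-- `d` is `E_{g,λ0}`-optimal. -/
def EOptimal {p t : ℕ} (n : ℕ) (S : Matrix (Fin p) (Fin p) ℝ) (g : Measure (Fin t → ℝ))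
    (l0 : ℝ) (w : TrtSeq p t → ℝ) : Prop :=
  ∀ w' : TrtSeq p t → ℝ, EAdmissible n S g l0 w' → Ecrit n S g l0 w' ≤ Ecrit n S g l0 w

/-- A pseudo symmetric design: treatments equireplicated in each period,
and all `C_{dij}` completely symmetric. -/
def IsPseudoSymmetric {p t : ℕ} (n : ℕ) (S : Matrix (Fin p) (Fin p) ℝ)
    (w : TrtSeq p t → ℝ) : Prop :=
  (∀ (k : Fin p) (i : Fin t),
    (∑ s ∈ Finset.univ.filter fun s : TrtSeq p t => s k = i, w s) = 1 / (t : ℝ)) ∧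
  ∀ i j : Fin 2, ∃ a b : ℝ, CD n S w i j = a • (1 : Matrix (Fin t) (Fin t) ℝ) + b • Jmat t

/-- Eigenvalues of a (Hermitian) matrix sorted increasingly with multiplicity. -/
def sortedEigs {t : ℕ} (C : Matrix (Fin t) (Fin t) ℝ) : Fin t → ℝ :=
  if h : C.IsHermitian then (fun i => h.eigenvalues (Tuple.sort h.eigenvalues i))
  else fun _ => 0

/-- `Φ_D(C) = (∏_{i=1}^{t-1} a_i)^{1/(t-1)}` (eigenvalues sorted increasingly). -/
def PhiD {t : ℕ} (C : Matrix (Fin t) (Fin t) ℝ) : ℝ :=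
  (∏ i ∈ Finset.univ.filter fun i : Fin t => (i : ℕ) ≠ 0, sortedEigs C i) ^ (((t : ℝ) - 1)⁻¹)

/-- `Φ_A(C) = (t-1)(∑_{i=1}^{t-1} a_i⁻¹)⁻¹` if `a_1 > 0`, else `0`. -/
def PhiA {t : ℕ} (C : Matrix (Fin t) (Fin t) ℝ) : ℝ :=
  if ∀ i : Fin t, (i : ℕ) ≠ 0 → 0 < sortedEigs C i then
    ((t : ℝ) - 1) *
      (∑ i ∈ Finset.univ.filter fun i : Fin t => (i : ℕ) ≠ 0, (sortedEigs C i)⁻¹)⁻¹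
  else 0

/-- `Φ_T(C) = tr(C)/(t-1)`. -/
def PhiT {t : ℕ} (C : Matrix (Fin t) (Fin t) ℝ) : ℝ := C.trace / ((t : ℝ) - 1)

/-- The criterion value `∫ Φ(C_{d,τ0,λ0}) g(dτ0)`. -/
def PhiCrit {p t : ℕ} (n : ℕ) (S : Matrix (Fin p) (Fin p) ℝ)
    (Phi : Matrix (Fin t) (Fin t) ℝ → ℝ) (g : Measure (Fin t → ℝ)) (l0 : ℝ)
    (w : TrtSeq p t → ℝ) : ℝ :=
  ∫ τ0, Phi (CInfo n S w τ0 l0) ∂g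

/-- Competing designs for a `Φ`-criterion. -/
def PhiAdmissible {p t : ℕ} (n : ℕ) (S : Matrix (Fin p) (Fin p) ℝ)
    (Phi : Matrix (Fin t) (Fin t) ℝ → ℝ) (g : Measure (Fin t → ℝ)) (l0 : ℝ)
    (w : TrtSeq p t → ℝ) : Prop :=
  IsDesign w ∧ (∀ᵐ τ0 ∂g, 0 < τ0 ⬝ᵥ (CD n S w 1 1 *ᵥ τ0)) ∧
    Integrable (fun τ0 => Phi (CInfo n S w τ0 l0)) g

/-- `d` is `Φ_{g,λ0}`-optimal. -/
def PhiOptimal {p t : ℕ} (n : ℕ) (S : Matrix (Fin p) (Fin p) ℝ)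
    (Phi : Matrix (Fin t) (Fin t) ℝ → ℝ) (g : Measure (Fin t → ℝ)) (l0 : ℝ)
    (w : TrtSeq p t → ℝ) : Prop :=
  ∀ w' : TrtSeq p t → ℝ, PhiAdmissible n S Phi g l0 w' →
    PhiCrit n S Phi g l0 w' ≤ PhiCrit n S Phi g l0 w

/-- `H_1(s) = F_s`, `H_2(s) = T_s + λ0 F_s` (for estimating `λ`). -/
def Hmat {p t : ℕ} (l0 : ℝ) (i : Fin 2) (s : TrtSeq p t) : Matrix (Fin p) (Fin t) ℝ :=
  if i = 0 then Fmat s else Tmat s + l0 • Fmat s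

/-- `Â_{sij} = B_t H_i(s)' B̃ H_j(s) B_t`. -/
def Ahat {p t : ℕ} (S : Matrix (Fin p) (Fin p) ℝ) (l0 : ℝ) (s : TrtSeq p t) (i j : Fin 2) :
    Matrix (Fin t) (Fin t) ℝ :=
  Bmat t * (Hmat l0 i s)ᵀ * Btil S * Hmat l0 j s * Bmat t

/-- `h_{sij} = tr Â_{sij}`. -/
def hseq {p t : ℕ} (S : Matrix (Fin p) (Fin p) ℝ) (l0 : ℝ) (s : TrtSeq p t) (i j : Fin 2) : ℝ :=
  (Ahat S l0 s i j).trace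

/-- `Â_{dij} = n ∑_s p_s Â_{sij}`. -/
def AhatD {p t : ℕ} (n : ℕ) (S : Matrix (Fin p) (Fin p) ℝ) (l0 : ℝ) (w : TrtSeq p t → ℝ)
    (i j : Fin 2) : Matrix (Fin t) (Fin t) ℝ :=
  (n : ℝ) • ∑ s : TrtSeq p t, w s • Ahat S l0 s i j

/-- `A_{dij} = Â_{dij} - n (∑_s p_s H_i(s) B_t)' B̃ (∑_s p_s H_j(s) B_t)`. -/
def AD {p t : ℕ} (n : ℕ) (S : Matrix (Fin p) (Fin p) ℝ) (l0 : ℝ) (w : TrtSeq p t → ℝ)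
    (i j : Fin 2) : Matrix (Fin t) (Fin t) ℝ :=
  AhatD n S l0 w i j -
    (n : ℝ) • ((∑ s : TrtSeq p t, w s • (Hmat l0 i s * Bmat t))ᵀ * Btil S *
      (∑ s : TrtSeq p t, w s • (Hmat l0 j s * Bmat t)))

/-- `G` is a generalized inverse of `A`. -/
def IsGInv {t : ℕ} (A G : Matrix (Fin t) (Fin t) ℝ) : Prop := A * G * A = A

/-- `A_d(G) = A_{d11} - A_{d12} G A_{d21}` with `A_{d21} = A_{d12}'`. -/
def ADfun {p t : ℕ} (n : ℕ) (S : Matrix (Fin p) (Fin p) ℝ) (l0 : ℝ) (w : TrtSeq p t → ℝ)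
    (G : Matrix (Fin t) (Fin t) ℝ) : Matrix (Fin t) (Fin t) ℝ :=
  AD n S l0 w 0 0 - AD n S l0 w 0 1 * G * (AD n S l0 w 0 1)ᵀ

/-- `r_s(x) = h_{s11} + 2 h_{s12} x + h_{s22} x²`. -/
def rSeq {p t : ℕ} (S : Matrix (Fin p) (Fin p) ℝ) (l0 : ℝ) (s : TrtSeq p t) (x : ℝ) : ℝ :=
  hseq S l0 s 0 0 + 2 * hseq S l0 s 0 1 * x + hseq S l0 s 1 1 * x ^ 2

/-- `r(x) = max_s r_s(x)`. -/
def rMax (p t : ℕ) (S : Matrix (Fin p) (Fin p) ℝ) (l0 : ℝ) (x : ℝ) : ℝ :=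
  sSup (Set.range fun s : TrtSeq p t => rSeq S l0 s x)

/-- `y_0 = inf_x r(x)`. -/
def yZero (p t : ℕ) (S : Matrix (Fin p) (Fin p) ℝ) (l0 : ℝ) : ℝ := ⨅ x : ℝ, rMax p t S l0 x

/-!
`C_{d,τ0,λ0}` is a partial covariance: the Schur complement of `Cov(Y, Y)` in the joint covariance
matrix, under the design weights, of `X` and `Y`, the derivatives of the mean response in `τ` and in
`λ`. By the law of total covariance the joint covariance matrix is Loewner-concave in the weights,
and a Schur complement, being the largest `C` for which `fromBlocks C 0 0 0` lies below the joint
matrix, inherits this concavity. Relabelling the treatments in the design amounts to permuting `τ0`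
and conjugating the information matrix by a permutation matrix. Hence the average over `σ` of
`Φ(C_{d,στ0,λ0})` is at most `Φ(C_{d*,τ0,λ0})` pointwise in `τ0`, and exchangeability of the prior
gives every term on the left the same integral. On the right, `Φ(C_{d*,τ0,λ0})` is bounded above,
since `C_{d*,τ0,λ0}` lies below the covariance of `X`, which does not depend on `τ0`; it is
measurable because finite-dimensional concave functions are continuous.
-/

section SchurComplement

open scoped MatrixOrder

variable {k r : Type*}

lemma fromBlocks_zero_le_fromBlocks_iff [Finite k] [Fintype r] [DecidableEq r] (C A : Matrix k k ℝ)
    (B : Matrix k r ℝ) {D : Matrix r r ℝ} (hD : D.PosDef) :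
    fromBlocks C 0 0 0 ≤ fromBlocks A B Bᵀ D ↔ C ≤ A - B * D⁻¹ * Bᵀ := by
  have := hD.isUnit.invertible
  have key := PosDef.fromBlocks₂₂ (A - C) B hD
  rw [conjTranspose_eq_transpose_of_trivial] at key
  rw [le_iff, le_iff, sub_right_comm, ← key, sub_eq_add_neg, fromBlocks_neg, fromBlocks_add]
  simp only [neg_zero, add_zero, sub_eq_add_neg]

lemma posSemidef_sub_inv_smul_vecMulVec [Fintype k] {A : Matrix k k ℝ} (hA : A.PosSemidef)
    (e : k → ℝ) :
    (A - (e ⬝ᵥ (A *ᵥ e))⁻¹ • (A * vecMulVec e e * A)).PosSemidef := by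
  set c := e ⬝ᵥ (A *ᵥ e)
  set E := vecMulVec e e
  have hAt : Aᵀ = A := hA.isHermitian
  have hEt : Eᵀ = E := transpose_vecMulVec e e
  have hEAE : E * A * E = c • E := by
    rw [vecMulVec_mul, vecMulVec_mul_vecMulVec, ← dotProduct_mulVec]
    ext i j; simp [E, vecMulVec_apply]; ring
  have hAEAEA : A * E * A * (E * A) = c • (A * E * A) :=
    calc A * E * A * (E * A) = A * (E * A * E) * A := by simp only [Matrix.mul_assoc]
      _ = c • (A * E * A) := by rw [hEAE, Matrix.mul_smul, Matrix.smul_mul]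
  have key : A - c⁻¹ • (A * E * A) = (1 - c⁻¹ • (E * A))ᴴ * A * (1 - c⁻¹ • (E * A)) := by
    have hc : c⁻¹ * c⁻¹ * c = c⁻¹ := by simpa only [inv_inv] using mul_self_mul_inv c⁻¹
    rw [conjTranspose_eq_transpose_of_trivial, transpose_sub, transpose_one, transpose_smul,
      transpose_mul, hAt, hEt, Matrix.sub_mul, Matrix.one_mul, Matrix.smul_mul, Matrix.mul_sub,
      Matrix.mul_one, Matrix.mul_smul, Matrix.sub_mul, Matrix.smul_mul, hAEAEA, smul_sub, smul_smul,
      smul_smul, hc, ← Matrix.mul_assoc A E A, sub_self, sub_zero]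
  rw [key]
  exact hA.conjTranspose_mul_mul_same _

end SchurComplement

section WeightedCovariance

open scoped MatrixOrder

variable {ι m k l k' r : Type*} [Fintype ι] [Fintype m]

/-- The covariance matrix `E[Xᵀ B Y] - E[X]ᵀ B E[Y]` of two matrix-valued variables on `ι` under the
(possibly signed) weights `w`, with values paired by `B`. The matrices `C_{dij}` are of this
form. -/
def weightedCov (B : Matrix m m ℝ) (w : ι → ℝ) (X : ι → Matrix m k ℝ) (Y : ι → Matrix m l ℝ) :
    Matrix k l ℝ :=
  ∑ s, w s • ((X s)ᵀ * B * Y s) - (∑ s, w s • X s)ᵀ * B * ∑ s, w s • Y s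

variable {B : Matrix m m ℝ}

lemma transpose_weightedCov (hB : B.IsSymm) (w : ι → ℝ) (X : ι → Matrix m k ℝ)
    (Y : ι → Matrix m l ℝ) : (weightedCov B w X Y)ᵀ = weightedCov B w Y X := by
  simp only [weightedCov, transpose_sub, transpose_sum, transpose_smul, transpose_mul,
    transpose_transpose, hB.eq, Matrix.mul_assoc]

variable (B)

lemma weightedCov_mul_left [Fintype k] (w : ι → ℝ) (X : ι → Matrix m k ℝ) (P : Matrix k k' ℝ)
    (Y : ι → Matrix m l ℝ) :
    weightedCov B w (fun s => X s * P) Y = Pᵀ * weightedCov B w X Y := by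
  have hsum : ∑ s, w s • ((X s * P)ᵀ * B * Y s) = Pᵀ * ∑ s, w s • ((X s)ᵀ * B * Y s) := by
    simp only [Matrix.mul_sum, Matrix.mul_smul, transpose_mul, Matrix.mul_assoc]
  rw [weightedCov, hsum]
  simp only [weightedCov, ← Matrix.smul_mul, ← Matrix.sum_mul, transpose_mul, Matrix.mul_sub,
    Matrix.mul_assoc]

lemma weightedCov_mul_right [Fintype l] (w : ι → ℝ) (X : ι → Matrix m k ℝ) (Y : ι → Matrix m l ℝ)
    (Q : Matrix l k' ℝ) :
    weightedCov B w X (fun s => Y s * Q) = weightedCov B w X Y * Q := by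
  simp only [weightedCov, ← Matrix.smul_mul, ← Matrix.sum_mul, Matrix.sub_mul, ← Matrix.mul_assoc]

lemma weightedCov_add_smul_left (w : ι → ℝ) (X X' : ι → Matrix m k ℝ) (c : ℝ)
    (Y : ι → Matrix m l ℝ) :
    weightedCov B w (X + c • X') Y = weightedCov B w X Y + c • weightedCov B w X' Y := by
  simp only [weightedCov, Pi.add_apply, Pi.smul_apply, transpose_add, transpose_smul, smul_add,
    Matrix.add_mul, Matrix.smul_mul, Finset.sum_add_distrib, smul_sub, smul_comm _ c,
    ← Finset.smul_sum]
  abel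

lemma weightedCov_add_smul_right (w : ι → ℝ) (X : ι → Matrix m k ℝ) (Y Y' : ι → Matrix m l ℝ)
    (c : ℝ) :
    weightedCov B w X (Y + c • Y') = weightedCov B w X Y + c • weightedCov B w X Y' := by
  simp only [weightedCov, Pi.add_apply, Pi.smul_apply, smul_add, Matrix.mul_add, Matrix.mul_smul,
    Finset.sum_add_distrib, smul_sub, smul_comm _ c, ← Finset.smul_sum]
  abel

lemma weightedCov_comp {κ : Type*} [Fintype κ] (e : κ ≃ ι) (w : ι → ℝ) (X : ι → Matrix m k ℝ)
    (Y : ι → Matrix m l ℝ) :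
    weightedCov B (w ∘ e) (X ∘ e) (Y ∘ e) = weightedCov B w X Y := by
  simp only [weightedCov, Function.comp_apply, e.sum_comp fun s => w s • ((X s)ᵀ * B * Y s),
    e.sum_comp fun s => w s • X s, e.sum_comp fun s => w s • Y s]

lemma weightedCov_fromCols (w : ι → ℝ) (X : ι → Matrix m k ℝ) (Y : ι → Matrix m r ℝ) :
    weightedCov B w (fun s => fromCols (X s) (Y s)) (fun s => fromCols (X s) (Y s)) =
      fromBlocks (weightedCov B w X X) (weightedCov B w X Y)
        (weightedCov B w Y X) (weightedCov B w Y Y) := by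
  ext (i | i) (j | j) <;>
    simp [weightedCov, Matrix.sum_apply, Matrix.mul_apply, Matrix.sub_apply]

/-- The law of total covariance for a mixture of two weightings. -/
lemma weightedCov_convexCombo (w₁ w₂ : ι → ℝ) (X : ι → Matrix m k ℝ) (Y : ι → Matrix m l ℝ)
    {a b : ℝ} (hab : a + b = 1) :
    weightedCov B (a • w₁ + b • w₂) X Y =
      a • weightedCov B w₁ X Y + b • weightedCov B w₂ X Y +
        (a * b) • ((∑ s, w₁ s • X s - ∑ s, w₂ s • X s)ᵀ * B *
          (∑ s, w₁ s • Y s - ∑ s, w₂ s • Y s)) := by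
  obtain rfl : b = 1 - a := by linarith
  simp only [weightedCov, Pi.add_apply, Pi.smul_apply, add_smul, smul_assoc,
    Finset.sum_add_distrib, ← Finset.smul_sum, transpose_add, transpose_sub, transpose_smul,
    Matrix.add_mul, Matrix.mul_add, Matrix.sub_mul, Matrix.mul_sub, Matrix.smul_mul,
    Matrix.mul_smul]
  module

variable {B}

lemma concaveOn_weightedCov_self [Finite k] (hB : B.PosSemidef) (X : ι → Matrix m k ℝ) :
    ConcaveOn ℝ Set.univ fun w => weightedCov B w X X := by
  refine ⟨convex_univ, fun w₁ _ w₂ _ a b ha hb hab => ?_⟩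
  beta_reduce
  rw [weightedCov_convexCombo B w₁ w₂ X X hab, le_add_iff_nonneg_right, nonneg_iff_posSemidef]
  exact (hB.conjTranspose_mul_mul_same _).smul (mul_nonneg ha hb)

lemma convex_setOf_posDef_weightedCov [Finite r] (hB : B.PosSemidef) (Y : ι → Matrix m r ℝ) :
    Convex ℝ {w | (weightedCov B w Y Y).PosDef} := by
  refine convex_iff_forall_pos.2 fun w₁ h₁ w₂ h₂ a b ha hb hab => ?_
  have hle := (concaveOn_weightedCov_self hB Y).2 (Set.mem_univ w₁) (Set.mem_univ w₂)
    ha.le hb.le hab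
  simpa using ((h₁.smul ha).add (h₂.smul hb)).add_posSemidef hle

variable [Fintype r] [DecidableEq r]

/-- The covariance of `X` after adjustment for `Y`, i.e. the Schur complement of `Cov(Y, Y)` in the
joint covariance matrix. The information matrices `C_{d,τ0,λ0}` are of this form. -/
def partialCov (B : Matrix m m ℝ) (w : ι → ℝ) (X : ι → Matrix m k ℝ) (Y : ι → Matrix m r ℝ) :
    Matrix k k ℝ :=
  weightedCov B w X X - weightedCov B w X Y * (weightedCov B w Y Y)⁻¹ * weightedCov B w Y X

lemma isSymm_partialCov (hB : B.IsSymm) (w : ι → ℝ) (X : ι → Matrix m k ℝ)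
    (Y : ι → Matrix m r ℝ) : (partialCov B w X Y).IsSymm := by
  simp only [IsSymm, partialCov, transpose_sub, transpose_mul, transpose_nonsing_inv,
    transpose_weightedCov hB, Matrix.mul_assoc]

lemma partialCov_mul_left [Fintype k] (B : Matrix m m ℝ) (w : ι → ℝ) (X : ι → Matrix m k ℝ)
    (P : Matrix k k ℝ) (Y : ι → Matrix m r ℝ) :
    partialCov B w (fun s => X s * P) Y = Pᵀ * partialCov B w X Y * P := by
  simp only [partialCov, weightedCov_mul_left, weightedCov_mul_right, Matrix.mul_sub,
    Matrix.sub_mul, Matrix.mul_assoc]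

variable [Finite k]

lemma partialCov_le (hB : B.IsSymm) {w : ι → ℝ} (X : ι → Matrix m k ℝ) {Y : ι → Matrix m r ℝ}
    (hY : (weightedCov B w Y Y).PosSemidef) : partialCov B w X Y ≤ weightedCov B w X X := by
  rw [partialCov, sub_le_self_iff, nonneg_iff_posSemidef, ← transpose_weightedCov hB w X Y]
  exact hY.inv.mul_mul_conjTranspose_same _

lemma fromBlocks_zero_le_weightedCov_iff (hB : B.IsSymm) {w : ι → ℝ} (X : ι → Matrix m k ℝ)
    {Y : ι → Matrix m r ℝ} (hY : (weightedCov B w Y Y).PosDef) (C : Matrix k k ℝ) :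
    fromBlocks C 0 0 0 ≤
        weightedCov B w (fun s => fromCols (X s) (Y s)) (fun s => fromCols (X s) (Y s)) ↔
      C ≤ partialCov B w X Y := by
  rw [weightedCov_fromCols, partialCov, ← transpose_weightedCov hB w X Y,
    fromBlocks_zero_le_fromBlocks_iff _ _ _ hY]

/-- The partial covariance is the largest `C` with `fromBlocks C 0 0 0` below the joint covariance,
so it inherits concavity from the latter. -/
lemma concaveOn_partialCov (hB : B.PosSemidef) (X : ι → Matrix m k ℝ) (Y : ι → Matrix m r ℝ) :
    ConcaveOn ℝ {w | (weightedCov B w Y Y).PosDef} fun w => partialCov B w X Y := by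
  have hconv := convex_setOf_posDef_weightedCov hB Y
  refine ⟨hconv, fun w₁ h₁ w₂ h₂ a b ha hb hab => ?_⟩
  have hBs : B.IsSymm := hB.isHermitian
  rw [← fromBlocks_zero_le_weightedCov_iff hBs X (hconv h₁ h₂ ha hb hab)]
  have := Fintype.ofFinite k
  have le_joint {w} (hw : (weightedCov B w Y Y).PosDef) :=
    (fromBlocks_zero_le_weightedCov_iff hBs X hw _).2 le_rfl
  calc fromBlocks (a • partialCov B w₁ X Y + b • partialCov B w₂ X Y) 0 0 0
      = a • fromBlocks (partialCov B w₁ X Y) 0 0 0 +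
          b • fromBlocks (partialCov B w₂ X Y) 0 0 0 := by
        simp only [fromBlocks_smul, fromBlocks_add, smul_zero, add_zero]
    _ ≤ a • weightedCov B w₁ _ _ + b • weightedCov B w₂ _ _ :=
        add_le_add (smul_le_smul_of_nonneg_left (le_joint h₁) ha)
          (smul_le_smul_of_nonneg_left (le_joint h₂) hb)
    _ ≤ _ := (concaveOn_weightedCov_self hB _).2 (Set.mem_univ w₁) (Set.mem_univ w₂) ha hb hab

end WeightedCovariance

section ConcaveFunction

/-- Composing `Φ` with a linear projection onto `P` makes it concave on all of `V`. -/
lemma exists_continuous_eqOn_of_concaveOn_submodule {V : Type*} [NormedAddCommGroup V]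
    [NormedSpace ℝ V] [FiniteDimensional ℝ V] {P : Submodule ℝ V} {Φ : V → ℝ}
    (hΦ : ConcaveOn ℝ (P : Set V) Φ) :
    ∃ Ψ : V → ℝ, Continuous Ψ ∧ Set.EqOn Ψ Φ P := by
  obtain ⟨π, hπ⟩ := P.subtype.exists_leftInverse_of_injective P.ker_subtype
  have hconc : ConcaveOn ℝ Set.univ (Φ ∘ (P.subtype ∘ₗ π)) := by
    have h := hΦ.comp_linearMap (P.subtype ∘ₗ π)
    rwa [Set.eq_univ_of_forall (s := (P.subtype ∘ₗ π) ⁻¹' (P : Set V)) fun v => (π v).2] at h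
  refine ⟨_, continuousOn_univ.1 (hconc.continuousOn isOpen_univ), fun v hv => ?_⟩
  have hv' : π v = ⟨v, hv⟩ := LinearMap.congr_fun hπ ⟨v, hv⟩
  simp [hv']

lemma stronglyMeasurable_comp_of_concaveOn {α V : Type*} [MeasurableSpace α] [NormedAddCommGroup V]
    [NormedSpace ℝ V] [FiniteDimensional ℝ V] {P : Submodule ℝ V} {Φ : V → ℝ}
    (hΦ : ConcaveOn ℝ (P : Set V) Φ) {f : α → V} (hf : StronglyMeasurable f) (hfP : ∀ x, f x ∈ P) :
    StronglyMeasurable fun x => Φ (f x) := by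
  obtain ⟨Ψ, hΨ, hEq⟩ := exists_continuous_eqOn_of_concaveOn_submodule hΦ
  simpa only [fun x => hEq (hfP x)] using hΨ.comp_stronglyMeasurable hf

end ConcaveFunction

lemma integral_le_integral_of_sum_mul_comp_le {α ι : Type*} [MeasurableSpace α] [Fintype ι]
    {g : Measure α} [IsFiniteMeasure g] {T : ι → α → α} (hT : ∀ i, MeasurePreserving (T i) g g)
    {a : ι → ℝ} (ha : ∑ i, a i = 1) {φ ψ : α → ℝ} (hφ : Integrable φ g)
    (hψ : AEStronglyMeasurable ψ g) (hle : ∀ᵐ x ∂g, ∑ i, a i * φ (T i x) ≤ ψ x)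
    {C : ℝ} (hC : ∀ᵐ x ∂g, ψ x ≤ C) : ∫ x, φ x ∂g ≤ ∫ x, ψ x ∂g := by
  have hφT (i) : Integrable (fun x => a i * φ (T i x)) g :=
    ((hT i).integrable_comp_of_integrable hφ).const_mul (a i)
  have hsum : Integrable (fun x => ∑ i, a i * φ (T i x)) g :=
    integrable_finsetSum _ fun i _ => hφT i
  have integral_comp (i) : ∫ x, φ (T i x) ∂g = ∫ x, φ x ∂g := by
    have hmap := (hT i).map_eq
    rw [← integral_map (hT i).aemeasurable (hmap.symm ▸ hφ.aestronglyMeasurable), hmap]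
  calc ∫ x, φ x ∂g
      = ∫ x, ∑ i, a i * φ (T i x) ∂g := by
        rw [integral_finsetSum _ fun i _ => hφT i]
        simp only [integral_const_mul, integral_comp, ← Finset.sum_mul, ha, one_mul]
    _ ≤ ∫ x, ψ x ∂g :=
        integral_mono_ae hsum
          (integrable_of_le_of_le hψ hle hC hsum (integrable_const C)) hle

section CrossoverDesign

open scoped MatrixOrder

variable {p t : ℕ}

/-- The centred incidence matrix `G_i(s) B_t`, i.e. the coefficients of the direct effects (`i = 0`)
or of the carryover effects (`i = 1`) in the mean response to the sequence `s`. -/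
def centredIncidence (i : Fin 2) (s : TrtSeq p t) : Matrix (Fin p) (Fin t) ℝ :=
  Gmat i s * Bmat t

/-- The derivative in `τ` of the mean response `T_s B_t τ + λ F_s B_t τ` of the proportional model
at `λ = l0`. -/
def tauGradient (l0 : ℝ) : TrtSeq p t → Matrix (Fin p) (Fin t) ℝ :=
  centredIncidence 0 + l0 • centredIncidence 1

/-- The derivative in `λ` of the mean response `T_s B_t τ + λ F_s B_t τ` of the proportional model,
as a one-column matrix. -/
def lambdaGradient (τ : Fin t → ℝ) (s : TrtSeq p t) : Matrix (Fin p) Unit ℝ :=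
  centredIncidence 1 s * replicateCol Unit τ

lemma transpose_Bmat : (Bmat t)ᵀ = Bmat t := by
  rw [Bmat, transpose_sub, transpose_one, transpose_smul]
  rfl

lemma posSemidef_Btil {S : Matrix (Fin p) (Fin p) ℝ} (hS : S.PosSemidef) : (Btil S).PosSemidef := by
  have hJ : Jmat p = vecMulVec (fun _ => 1) fun _ => 1 := by
    ext i j
    simp only [Jmat, of_apply, vecMulVec_apply, mul_one]
  rw [Btil, hJ]
  exact posSemidef_sub_inv_smul_vecMulVec hS.inv _

section InformationMatrix

variable (n : ℕ) (S : Matrix (Fin p) (Fin p) ℝ) (w : TrtSeq p t → ℝ) (τ : Fin t → ℝ)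

lemma CD_eq_weightedCov (i j : Fin 2) :
    CD n S w i j =
      weightedCov ((n : ℝ) • Btil S) w (centredIncidence i) (centredIncidence j) := by
  simp only [CD, ChatD, Chat, weightedCov, centredIncidence, transpose_mul, transpose_Bmat,
    Matrix.mul_smul, Matrix.smul_mul, smul_comm _ (n : ℝ), ← Finset.smul_sum, Matrix.mul_assoc]

lemma weightedCov_lambdaGradient :
    weightedCov ((n : ℝ) • Btil S) w (lambdaGradient τ) (lambdaGradient τ) =
      diagonal fun _ => τ ⬝ᵥ (CD n S w 1 1 *ᵥ τ) := by
  unfold lambdaGradient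
  rw [weightedCov_mul_left, weightedCov_mul_right, ← CD_eq_weightedCov, transpose_replicateCol,
    ← replicateCol_mulVec]
  ext
  rw [replicateRow_mul_replicateCol_apply, diagonal_apply_eq]

lemma posDef_weightedCov_lambdaGradient_iff :
    (weightedCov ((n : ℝ) • Btil S) w (lambdaGradient τ) (lambdaGradient τ)).PosDef ↔
      0 < τ ⬝ᵥ (CD n S w 1 1 *ᵥ τ) := by
  rw [weightedCov_lambdaGradient, posDef_diagonal_iff, forall_const]

lemma CInfo_eq_partialCov (l0 : ℝ) :
    CInfo n S w τ l0 = partialCov ((n : ℝ) • Btil S) w (tauGradient l0) (lambdaGradient τ) := by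
  have hinv : (weightedCov ((n : ℝ) • Btil S) w (lambdaGradient τ) (lambdaGradient τ))⁻¹ =
      (τ ⬝ᵥ (CD n S w 1 1 *ᵥ τ))⁻¹ • 1 := by
    rw [weightedCov_lambdaGradient, inv_subsingleton, smul_one_eq_diagonal]
    simp
  have hrank : vecMulVec τ τ = replicateCol Unit τ * (replicateCol Unit τ)ᵀ := by
    rw [transpose_replicateCol, vecMulVec_eq Unit]
  rw [partialCov, hinv, CInfo, hrank]
  unfold lambdaGradient tauGradient
  simp only [weightedCov_add_smul_left, weightedCov_add_smul_right, weightedCov_mul_left,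
    weightedCov_mul_right, ← CD_eq_weightedCov, Matrix.mul_smul, Matrix.smul_mul, Matrix.mul_one,
    Matrix.mul_assoc, Matrix.mul_add, smul_add, pow_two, smul_smul, mul_comm l0]
  abel

end InformationMatrix

section Relabelling

lemma Jmat_mul_Smat (σ : Equiv.Perm (Fin t)) : Jmat t * Smat σ = Jmat t := by
  ext i j
  simp only [Jmat, Smat, mul_apply, of_apply, one_mul, ← Equiv.symm_apply_eq]
  simp

lemma Smat_mul_Jmat (σ : Equiv.Perm (Fin t)) : Smat σ * Jmat t = Jmat t := by
  ext i j
  simp [Jmat, Smat, mul_apply]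

lemma Smat_mul_Bmat (σ : Equiv.Perm (Fin t)) : Smat σ * Bmat t = Bmat t * Smat σ := by
  simp only [Bmat, Matrix.mul_sub, Matrix.sub_mul, Matrix.mul_smul, Matrix.smul_mul, Matrix.mul_one,
    Matrix.one_mul, Smat_mul_Jmat, Jmat_mul_Smat]

lemma Smat_mul_replicateCol (σ : Equiv.Perm (Fin t)) (τ : Fin t → ℝ) :
    Smat σ * replicateCol Unit τ = replicateCol Unit fun i => τ (σ i) := by
  ext i
  simp [Smat, mul_apply]

lemma Tmat_permSeq (σ : Equiv.Perm (Fin t)) (s : TrtSeq p t) :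
    Tmat (permSeq σ s) = Tmat s * Smat σ := by
  ext k i
  simp only [Tmat, Smat, permSeq, mul_apply, of_apply, ite_mul, one_mul, zero_mul,
    Finset.sum_ite_eq, Finset.mem_univ, if_true]
  exact if_congr eq_comm rfl rfl

lemma Fmat_permSeq (σ : Equiv.Perm (Fin t)) (s : TrtSeq p t) :
    Fmat (permSeq σ s) = Fmat s * Smat σ := by
  ext k i
  by_cases hk : (k : ℕ) = 0
  · simp [Fmat, mul_apply, hk]
  · simp only [Fmat, Smat, permSeq, mul_apply, of_apply, hk, if_false, ite_mul, one_mul, zero_mul,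
      Finset.sum_ite_eq, Finset.mem_univ, if_true]
    exact if_congr eq_comm rfl rfl

lemma centredIncidence_permSeq (i : Fin 2) (σ : Equiv.Perm (Fin t)) (s : TrtSeq p t) :
    centredIncidence i (permSeq σ s) = centredIncidence i s * Smat σ := by
  have hG : Gmat i (permSeq σ s) = Gmat i s * Smat σ := by
    unfold Gmat
    split_ifs
    exacts [Tmat_permSeq σ s, Fmat_permSeq σ s]
  rw [centredIncidence, hG, centredIncidence, Matrix.mul_assoc, Smat_mul_Bmat, Matrix.mul_assoc]

lemma tauGradient_permSeq (l0 : ℝ) (σ : Equiv.Perm (Fin t)) (s : TrtSeq p t) :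
    tauGradient l0 (permSeq σ s) = tauGradient l0 s * Smat σ := by
  simp only [tauGradient, Pi.add_apply, Pi.smul_apply, centredIncidence_permSeq, Matrix.add_mul,
    Matrix.smul_mul]

lemma lambdaGradient_permSeq (τ : Fin t → ℝ) (σ : Equiv.Perm (Fin t)) (s : TrtSeq p t) :
    lambdaGradient τ (permSeq σ s) = lambdaGradient (fun i => τ (σ i)) s := by
  rw [lambdaGradient, centredIncidence_permSeq, Matrix.mul_assoc, Smat_mul_replicateCol,
    lambdaGradient]

/-- Relabelling the treatments by `σ`, as a permutation of the treatment sequences. -/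
def permSeqEquiv (p : ℕ) (σ : Equiv.Perm (Fin t)) : Equiv.Perm (TrtSeq p t) :=
  (Equiv.refl (Fin p)).arrowCongr σ

lemma weightedCov_permDesign {m k l : Type*} [Fintype m] (B : Matrix m m ℝ) (σ : Equiv.Perm (Fin t))
    (w : TrtSeq p t → ℝ) (X : TrtSeq p t → Matrix m k ℝ) (Y : TrtSeq p t → Matrix m l ℝ) :
    weightedCov B (permDesign σ w) X Y = weightedCov B w (X ∘ permSeq σ) (Y ∘ permSeq σ) := by
  have hw : permDesign σ w ∘ permSeqEquiv p σ = w := by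
    funext s
    exact congrArg w (funext fun k => σ.symm_apply_apply (s k))
  have h := weightedCov_comp B (permSeqEquiv p σ) (permDesign σ w) X Y
  rw [hw] at h
  exact h.symm

lemma partialCov_permDesign {m k r : Type*} [Fintype m] [Fintype r] [DecidableEq r]
    (B : Matrix m m ℝ) (σ : Equiv.Perm (Fin t)) (w : TrtSeq p t → ℝ)
    (X : TrtSeq p t → Matrix m k ℝ) (Y : TrtSeq p t → Matrix m r ℝ) :
    partialCov B (permDesign σ w) X Y = partialCov B w (X ∘ permSeq σ) (Y ∘ permSeq σ) := by
  simp only [partialCov, weightedCov_permDesign]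

variable (n : ℕ) (S : Matrix (Fin p) (Fin p) ℝ) (w : TrtSeq p t → ℝ) (σ : Equiv.Perm (Fin t))
  (τ : Fin t → ℝ)

lemma CInfo_permDesign (l0 : ℝ) :
    CInfo n S (permDesign σ w) τ l0 =
      (Smat σ)ᵀ * CInfo n S w (fun i => τ (σ i)) l0 * Smat σ := by
  simp only [CInfo_eq_partialCov, partialCov_permDesign, Function.comp_def, tauGradient_permSeq,
    lambdaGradient_permSeq, partialCov_mul_left]

lemma posDef_weightedCov_permDesign_lambdaGradient_iff :
    (weightedCov ((n : ℝ) • Btil S) (permDesign σ w) (lambdaGradient τ) (lambdaGradient τ)).PosDef ↔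
      0 < (fun i => τ (σ i)) ⬝ᵥ (CD n S w 1 1 *ᵥ fun i => τ (σ i)) := by
  simp only [weightedCov_permDesign, Function.comp_def, lambdaGradient_permSeq,
    posDef_weightedCov_lambdaGradient_iff]

end Relabelling

section Symmetrization

lemma sum_inv_factorial (t : ℕ) : ∑ _σ : Equiv.Perm (Fin t), (t.factorial : ℝ)⁻¹ = 1 := by
  simp [Fintype.card_perm, Nat.factorial_ne_zero]

lemma symmetrize_eq_sum (w : TrtSeq p t → ℝ) :
    symmetrize w = ∑ σ : Equiv.Perm (Fin t), (t.factorial : ℝ)⁻¹ • permDesign σ w := by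
  funext s
  simp [symmetrize, Finset.mul_sum]

variable {n : ℕ} {S : Matrix (Fin p) (Fin p) ℝ} {w : TrtSeq p t → ℝ} {τ : Fin t → ℝ}

lemma posSemidef_smul_Btil (hS : S.PosSemidef) : ((n : ℝ) • Btil S).PosSemidef :=
  (posSemidef_Btil hS).smul n.cast_nonneg

lemma isSymm_CInfo (hS : S.PosSemidef) (w : TrtSeq p t → ℝ) (τ : Fin t → ℝ) (l0 : ℝ) :
    (CInfo n S w τ l0).IsSymm := by
  rw [CInfo_eq_partialCov]
  exact isSymm_partialCov (posSemidef_smul_Btil hS).isHermitian _ _ _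

lemma CD_symmetrize_pos (hS : S.PosSemidef)
    (hτ : ∀ σ : Equiv.Perm (Fin t),
      0 < (fun i => τ (σ i)) ⬝ᵥ (CD n S w 1 1 *ᵥ fun i => τ (σ i))) :
    0 < τ ⬝ᵥ (CD n S (symmetrize w) 1 1 *ᵥ τ) := by
  rw [← posDef_weightedCov_lambdaGradient_iff, symmetrize_eq_sum]
  exact (convex_setOf_posDef_weightedCov (posSemidef_smul_Btil hS) _).sum_mem
    (fun _ _ => by positivity) (sum_inv_factorial t) fun σ _ =>
      (posDef_weightedCov_permDesign_lambdaGradient_iff n S w σ τ).2 (hτ σ)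

lemma sum_smul_CInfo_le_CInfo_symmetrize (hS : S.PosSemidef) (l0 : ℝ)
    (hτ : ∀ σ : Equiv.Perm (Fin t),
      0 < (fun i => τ (σ i)) ⬝ᵥ (CD n S w 1 1 *ᵥ fun i => τ (σ i))) :
    ∑ σ : Equiv.Perm (Fin t), (t.factorial : ℝ)⁻¹ • CInfo n S (permDesign σ w) τ l0 ≤
      CInfo n S (symmetrize w) τ l0 := by
  simp only [CInfo_eq_partialCov, symmetrize_eq_sum]
  exact (concaveOn_partialCov (posSemidef_smul_Btil hS) _ _).le_map_sum
    (fun _ _ => by positivity) (sum_inv_factorial t) fun σ _ =>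
      (posDef_weightedCov_permDesign_lambdaGradient_iff n S w σ τ).2 (hτ σ)

variable {Phi : Matrix (Fin t) (Fin t) ℝ → ℝ}

lemma sum_mul_map_CInfo_le_map_CInfo_symmetrize (hS : S.PosSemidef)
    (hconc : ConcaveOn ℝ {A | A.IsSymm} Phi)
    (hmono : MonotoneOn Phi {A | A.IsSymm})
    (hinv : ∀ σ : Equiv.Perm (Fin t), ∀ C : Matrix (Fin t) (Fin t) ℝ, C.IsSymm →
      Phi ((Smat σ)ᵀ * C * Smat σ) = Phi C) (l0 : ℝ)
    (hτ : ∀ σ : Equiv.Perm (Fin t),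
      0 < (fun i => τ (σ i)) ⬝ᵥ (CD n S w 1 1 *ᵥ fun i => τ (σ i))) :
    ∑ σ : Equiv.Perm (Fin t), (t.factorial : ℝ)⁻¹ * Phi (CInfo n S w (fun i => τ (σ i)) l0) ≤
      Phi (CInfo n S (symmetrize w) τ l0) := by
  have hsymm (σ : Equiv.Perm (Fin t)) : CInfo n S (permDesign σ w) τ l0 ∈ {A | A.IsSymm} :=
    isSymm_CInfo hS _ _ _
  calc ∑ σ : Equiv.Perm (Fin t), (t.factorial : ℝ)⁻¹ * Phi (CInfo n S w (fun i => τ (σ i)) l0)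
      = ∑ σ : Equiv.Perm (Fin t), (t.factorial : ℝ)⁻¹ • Phi (CInfo n S (permDesign σ w) τ l0) := by
        simp only [CInfo_permDesign, hinv _ _ (isSymm_CInfo hS _ _ _), smul_eq_mul]
    _ ≤ Phi (∑ σ : Equiv.Perm (Fin t), (t.factorial : ℝ)⁻¹ • CInfo n S (permDesign σ w) τ l0) :=
        hconc.le_map_sum (fun _ _ => by positivity) (sum_inv_factorial t) fun σ _ => hsymm σ
    _ ≤ Phi (CInfo n S (symmetrize w) τ l0) :=
        hmono (hconc.1.sum_mem (fun _ _ => by positivity) (sum_inv_factorial t) fun σ _ => hsymm σ)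
          (isSymm_CInfo hS _ _ _) (sum_smul_CInfo_le_CInfo_symmetrize hS l0 hτ)

lemma map_CInfo_le (hS : S.PosSemidef) (hmono : MonotoneOn Phi {A | A.IsSymm}) (l0 : ℝ)
    (hτ : 0 < τ ⬝ᵥ (CD n S w 1 1 *ᵥ τ)) :
    Phi (CInfo n S w τ l0) ≤
      Phi (weightedCov ((n : ℝ) • Btil S) w (tauGradient l0) (tauGradient l0)) := by
  have hB := (posSemidef_smul_Btil (n := n) hS).isHermitian
  refine hmono (isSymm_CInfo hS _ _ _) (transpose_weightedCov hB _ _ _) ?_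
  rw [CInfo_eq_partialCov]
  exact partialCov_le hB _ ((posDef_weightedCov_lambdaGradient_iff n S w τ).2 hτ).posSemidef

end Symmetrization

section Measurability

attribute [local instance] Matrix.normedAddCommGroup Matrix.normedSpace

lemma stronglyMeasurable_CInfo (n : ℕ) (S : Matrix (Fin p) (Fin p) ℝ) (w : TrtSeq p t → ℝ)
    (l0 : ℝ) : StronglyMeasurable fun τ => CInfo n S w τ l0 := by
  have : TopologicalSpace.PseudoMetrizableSpace (Matrix (Fin t) (Fin t) ℝ) :=
    inferInstanceAs (TopologicalSpace.PseudoMetrizableSpace (Fin t → Fin t → ℝ))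
  have hscalar : Continuous fun τ : Fin t → ℝ => τ ⬝ᵥ (CD n S w 1 1 *ᵥ τ) := by fun_prop
  have hmatrix : Continuous fun τ : Fin t → ℝ =>
      (CD n S w 0 1 + l0 • CD n S w 1 1) * vecMulVec τ τ * (CD n S w 1 0 + l0 • CD n S w 1 1) := by
    fun_prop
  exact stronglyMeasurable_const.sub
    (hscalar.measurable.inv.stronglyMeasurable.smul hmatrix.stronglyMeasurable)

lemma stronglyMeasurable_map_CInfo {S : Matrix (Fin p) (Fin p) ℝ} (hS : S.PosSemidef)
    {Phi : Matrix (Fin t) (Fin t) ℝ → ℝ} (hconc : ConcaveOn ℝ {A | A.IsSymm} Phi) (n : ℕ)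
    (w : TrtSeq p t → ℝ) (l0 : ℝ) : StronglyMeasurable fun τ => Phi (CInfo n S w τ l0) :=
  stronglyMeasurable_comp_of_concaveOn
    (P := selfAdjoint.submodule ℝ (Matrix (Fin t) (Fin t) ℝ)) hconc
    (stronglyMeasurable_CInfo n S w l0) fun τ => isSymm_CInfo hS w τ l0

end Measurability

end CrossoverDesign

open scoped MatrixOrder in
theorem stmt3_general (p t n : ℕ) (S : Matrix (Fin p) (Fin p) ℝ) (hS : S.PosDef)
    (Phi : Matrix (Fin t) (Fin t) ℝ → ℝ)
    (hconc : ∀ A B : Matrix (Fin t) (Fin t) ℝ, A.IsSymm → B.IsSymm →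
      ∀ a b : ℝ, 0 ≤ a → 0 ≤ b → a + b = 1 →
        a * Phi A + b * Phi B ≤ Phi (a • A + b • B))
    (hinv : ∀ (σ : Equiv.Perm (Fin t)) (C : Matrix (Fin t) (Fin t) ℝ), C.IsSymm →
      Phi ((Smat σ)ᵀ * C * Smat σ) = Phi C)
    (hmono : ∀ A B : Matrix (Fin t) (Fin t) ℝ, A.IsSymm → B.IsSymm →
      (B - A).PosSemidef → Phi A ≤ Phi B)
    (l0 : ℝ) (g : Measure (Fin t → ℝ)) [IsFiniteMeasure g]
    (hg : ∀ σ : Equiv.Perm (Fin t), Measure.map (fun τ i => τ (σ i)) g = g)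
    (w : TrtSeq p t → ℝ)
    (hC : ∀ᵐ τ0 ∂g, 0 < τ0 ⬝ᵥ (CD n S w 1 1 *ᵥ τ0))
    (hint : Integrable (fun τ0 => Phi (CInfo n S w τ0 l0)) g) :
    (∀ᵐ τ0 ∂g, 0 < τ0 ⬝ᵥ (CD n S (symmetrize w) 1 1 *ᵥ τ0)) ∧
    ∫ τ0, Phi (CInfo n S w τ0 l0) ∂g ≤
      ∫ τ0, Phi (CInfo n S (symmetrize w) τ0 l0) ∂g := by
  have hS' : S.PosSemidef := hS.posSemidef
  have hconc' : ConcaveOn ℝ {A | A.IsSymm} Phi :=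
    ⟨(selfAdjoint.submodule ℝ (Matrix (Fin t) (Fin t) ℝ)).convex,
      fun A hA B hB a b ha hb hab => hconc A B hA hB a b ha hb hab⟩
  have hmono' : MonotoneOn Phi {A | A.IsSymm} := fun A hA B hB hAB => hmono A B hA hB hAB
  have hrelabel (σ : Equiv.Perm (Fin t)) : MeasurePreserving (fun τ i => τ (σ i)) g g :=
    ⟨by fun_prop, hg σ⟩
  have hposσ : ∀ᵐ τ ∂g, ∀ σ : Equiv.Perm (Fin t),
      0 < (fun i => τ (σ i)) ⬝ᵥ (CD n S w 1 1 *ᵥ fun i => τ (σ i)) :=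
    ae_all_iff.2 fun σ => (hrelabel σ).quasiMeasurePreserving.ae hC
  have hpos : ∀ᵐ τ ∂g, 0 < τ ⬝ᵥ (CD n S (symmetrize w) 1 1 *ᵥ τ) :=
    hposσ.mono fun _ => CD_symmetrize_pos hS'
  exact ⟨hpos, integral_le_integral_of_sum_mul_comp_le hrelabel (sum_inv_factorial t) hint
    (stronglyMeasurable_map_CInfo hS' hconc' n _ l0).aestronglyMeasurable
    (hposσ.mono fun _ => sum_mul_map_CInfo_le_map_CInfo_symmetrize hS' hconc' hmono' hinv l0)
    (hpos.mono fun _ => map_CInfo_le hS' hmono' l0)⟩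

/-- for any concave, permutation-invariant, Loewner-monotone criterion
and any exchangeable prior, the symmetrized design is at least as good as `d`. -/
theorem stmt3 (p t n : ℕ) (hp : 2 ≤ p) (ht : 3 ≤ t) (hn : 1 ≤ n)
    (S : Matrix (Fin p) (Fin p) ℝ) (hS : S.PosDef)
    (Phi : Matrix (Fin t) (Fin t) ℝ → ℝ)
    (hconc : ∀ A B : Matrix (Fin t) (Fin t) ℝ, A.IsSymm → B.IsSymm →
      ∀ a b : ℝ, 0 ≤ a → 0 ≤ b → a + b = 1 →
        a * Phi A + b * Phi B ≤ Phi (a • A + b • B))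
    (hinv : ∀ (σ : Equiv.Perm (Fin t)) (C : Matrix (Fin t) (Fin t) ℝ),
      Phi ((Smat σ)ᵀ * C * Smat σ) = Phi C)
    (hmono : ∀ A B : Matrix (Fin t) (Fin t) ℝ, A.IsSymm → B.IsSymm →
      (B - A).PosSemidef → Phi A ≤ Phi B)
    (l0 : ℝ) (g : Measure (Fin t → ℝ)) (hg : IsExchangeablePrior g)
    (w : TrtSeq p t → ℝ) (hw : IsDesign w)
    (hC : ∀ᵐ τ0 ∂g, 0 < τ0 ⬝ᵥ (CD n S w 1 1 *ᵥ τ0))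
    (hint : Integrable (fun τ0 => Phi (CInfo n S w τ0 l0)) g) :
    (∀ᵐ τ0 ∂g, 0 < τ0 ⬝ᵥ (CD n S (symmetrize w) 1 1 *ᵥ τ0)) ∧
    ∫ τ0, Phi (CInfo n S w τ0 l0) ∂g ≤
      ∫ τ0, Phi (CInfo n S (symmetrize w) τ0 l0) ∂g := by
  obtain ⟨_, -, hmap⟩ := hg
  exact stmt3_general p t n S hS Phi hconc (fun σ C _ => hinv σ C) hmono l0 g hmap w hC hint
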